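/- Under the MS-LS model, if additionally α_i + α_j = α for all pairs i, j, then the expected nodal strength of a node given the previous state l satisfies E(Y_t | s_{t-1} = l) = G_l′(1) = Σ_{k=1}^K q_{lk} G̃_k′(1) = (N−1) e^α Σ_{k=1}^K q_{lk} (4σ_k²β + 1)^{−d/2}, where G_l and G̃_k denote the conditional probability generating functions of the nodal strength given s_{t-1} = l and given s_t = k respectively. -/

import Mathlib

open MeasureTheory ProbabilityTheory Real

noncomputable section

/-- Density of the centered isotropic Gaussian `N(0, σ² I_d)` on `ℝ^d`. -/
def gaussPdf (d : ℕ) (σ2 : ℝ) (x : EuclideanSpace ℝ (Fin d)) : ℝ :=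
  (2 * Real.pi * σ2) ^ (-(d : ℝ) / 2) * Real.exp (-‖x‖ ^ 2 / (2 * σ2))

/-- The centered isotropic Gaussian measure `N(0, σ² I_d)` on `ℝ^d`. -/
def gaussMeasure (d : ℕ) (σ2 : ℝ) : Measure (EuclideanSpace ℝ (Fin d)) :=
  volume.withDensity fun x => ENNReal.ofReal (gaussPdf d σ2 x)

/-- Unordered pairs of distinct nodes, represented as ordered pairs `(i, j)` with `i < j`. -/
abbrev Pairs (N : ℕ) : Type := {p : Fin N × Fin N // p.1 < p.2}

/-- Joint law of the latent positions `(Z_i)_{i}` (i.i.d. `N(0, σ² I_d)`) and of the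
edge weights `(Y_{ij})_{i<j}`, which given the latent positions are conditionally independent
Poisson variables with intensity `exp (α_i + α_j - β ‖Z_i - Z_j‖²)`. -/
def jointLaw (d N : ℕ) (β : ℝ) (α : Fin N → ℝ) (σ2 : ℝ) :
    Measure ((Fin N → EuclideanSpace ℝ (Fin d)) × (Pairs N → ℕ)) :=
  (volume.withDensity fun z : Fin N → EuclideanSpace ℝ (Fin d) =>
      ENNReal.ofReal (∏ i, gaussPdf d σ2 (z i))).bind fun z =>
    (Measure.pi fun p : Pairs N =>
        poissonMeasure
          (Real.exp (α p.1.1 + α p.1.2 - β * ‖z p.1.1 - z p.1.2‖ ^ 2)).toNNReal).map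
      fun y => (z, y)

/-- The Markov-switching latent space (MS-LS) network model: a hidden `K`-state Markov chain
`s`, state-dependent i.i.d. Gaussian latent positions `Z`, and symmetric edge weights `Y`
that conditionally on the current state (and given the latent positions) are independent
Poisson variables with log-intensity `α i + α j - β ‖Z i k - Z j k‖²`. -/
structure MSLS (Ω : Type) [MeasurableSpace Ω] where
  /-- the underlying probability measure -/
  P : Measure Ω
  isProb : IsProbabilityMeasure P
  /-- the dimension of the latent space -/
  d : ℕ
  /-- the number of nodes -/
  N : ℕ
  /-- the number of states of the hidden Markov chain -/
  K : ℕ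
  β : ℝ
  β_pos : 0 < β
  /-- individual effects -/
  α : Fin N → ℝ
  /-- state-specific variances of the latent positions -/
  σ2 : Fin K → ℝ
  σ2_pos : ∀ k, 0 < σ2 k
  /-- transition probabilities of the hidden Markov chain -/
  q : Fin K → Fin K → ℝ
  q_nonneg : ∀ l k, 0 ≤ q l k
  q_sum : ∀ l, ∑ k, q l k = 1
  /-- the hidden Markov chain -/
  s : ℕ → Ω → Fin K
  s_meas : ∀ t, Measurable (s t)
  /-- the latent positions in each state -/
  Z : Fin N → Fin K → Ω → EuclideanSpace ℝ (Fin d)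
  Z_meas : ∀ i k, Measurable (Z i k)
  /-- the edge weights -/
  Y : Fin N → Fin N → ℕ → Ω → ℕ
  Y_meas : ∀ i j t, Measurable (Y i j t)
  Y_symm : ∀ i j t ω, Y i j t ω = Y j i t ω
  state_pos : ∀ t k, P {ω | s t ω = k} ≠ 0
  /-- Markov transition probabilities -/
  trans_prob : ∀ t l k, ((P[|{ω | s t ω = l}]) {ω | s (t + 1) ω = k}).toReal = q l k
  /-- conditionally on the current state, the latent positions and the edge weights follow
  the Poisson latent space law -/
  cond_law_state : ∀ t k,
    (P[|{ω | s t ω = k}]).map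
        (fun ω => ((fun i => Z i k ω), fun p : Pairs N => Y p.1.1 p.1.2 t ω)) =
      jointLaw d N β α (σ2 k)
  /-- conditionally on the previous and current state, the latent positions and the edge
  weights follow the Poisson latent space law of the current state -/
  cond_law_pair : ∀ t l k, q l k ≠ 0 →
    (P[|{ω | s t ω = l} ∩ {ω | s (t + 1) ω = k}]).map
        (fun ω => ((fun i => Z i k ω), fun p : Pairs N => Y p.1.1 p.1.2 (t + 1) ω)) =
      jointLaw d N β α (σ2 k)

attribute [instance] MSLS.isProb

/-- The nodal strength `Y_{it} = Σ_{j ≠ i} Y_{ijt}` of node `i` at time `t`. -/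
def MSLS.strength {Ω : Type} [MeasurableSpace Ω] (M : MSLS Ω) (i : Fin M.N) (t : ℕ)
    (ω : Ω) : ℕ :=
  ∑ j ∈ Finset.univ.erase i, M.Y i j t ω

end

open scoped ENNReal NNReal
lemma gaussPdf_nonneg {d : ℕ} {σ2 : ℝ} (hσ : 0 < σ2) (x : EuclideanSpace ℝ (Fin d)) :
    0 ≤ gaussPdf d σ2 x := by
  unfold gaussPdf
  positivity

lemma measurable_gaussPdf (d : ℕ) (σ2 : ℝ) : Measurable (gaussPdf d σ2) := by
  unfold gaussPdf
  fun_prop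

lemma integrable_exp_neg_mul_sq_norm (d : ℕ) {b : ℝ} (hb : 0 < b) :
    Integrable fun v : EuclideanSpace ℝ (Fin d) => Real.exp (-b * ‖v‖ ^ 2) :=
  Integrable.of_integral_ne_zero <| by
    rw [GaussianFourier.integral_rexp_neg_mul_sq_norm hb]
    positivity

lemma lintegral_exp_neg_mul_sq_norm (d : ℕ) {b : ℝ} (hb : 0 < b) :
    ∫⁻ v : EuclideanSpace ℝ (Fin d), ENNReal.ofReal (Real.exp (-b * ‖v‖ ^ 2)) =
      ENNReal.ofReal ((Real.pi / b) ^ ((d : ℝ) / 2)) := by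
  rw [← ofReal_integral_eq_lintegral_ofReal (integrable_exp_neg_mul_sq_norm d hb)
    (ae_of_all _ fun _ => (Real.exp_pos _).le), GaussianFourier.integral_rexp_neg_mul_sq_norm hb,
    finrank_euclideanSpace_fin]

lemma integrable_gaussPdf (d : ℕ) {σ2 : ℝ} (hσ : 0 < σ2) : Integrable (gaussPdf d σ2) := by
  have h := (integrable_exp_neg_mul_sq_norm d (b := 1 / (2 * σ2)) (by positivity)).const_mul
    ((2 * Real.pi * σ2) ^ (-(d : ℝ) / 2))
  refine h.congr (ae_of_all _ fun x => ?_)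
  simp only [gaussPdf]
  ring_nf

lemma isProbabilityMeasure_gaussMeasure (d : ℕ) {σ2 : ℝ} (hσ : 0 < σ2) :
    IsProbabilityMeasure (gaussMeasure d σ2) := by
  refine ⟨?_⟩
  rw [gaussMeasure, withDensity_apply _ MeasurableSet.univ, Measure.restrict_univ]
  have h (x : EuclideanSpace ℝ (Fin d)) : ENNReal.ofReal (gaussPdf d σ2 x) =
      ENNReal.ofReal ((2 * Real.pi * σ2) ^ (-(d : ℝ) / 2)) *
        ENNReal.ofReal (Real.exp (-(1 / (2 * σ2)) * ‖x‖ ^ 2)) := by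
    rw [← ENNReal.ofReal_mul (by positivity), gaussPdf]
    ring_nf
  simp_rw [h]
  rw [lintegral_const_mul _ (by fun_prop), lintegral_exp_neg_mul_sq_norm d (by positivity),
    ← ENNReal.ofReal_mul (by positivity),
    show Real.pi / (1 / (2 * σ2)) = 2 * Real.pi * σ2 by field_simp,
    ← Real.rpow_add (by positivity), neg_div, neg_add_cancel, Real.rpow_zero, ENNReal.ofReal_one]

lemma lintegral_gaussMeasure (d : ℕ) (σ2 : ℝ) {f : EuclideanSpace ℝ (Fin d) → ℝ≥0∞}
    (hf : Measurable f) :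
    ∫⁻ x, f x ∂gaussMeasure d σ2 = ∫⁻ x, ENNReal.ofReal (gaussPdf d σ2 x) * f x := by
  rw [gaussMeasure, lintegral_withDensity_eq_lintegral_mul _
    (measurable_gaussPdf d σ2).ennreal_ofReal hf]
  rfl

/-- Completing the square in a Gaussian integral. -/
lemma lintegral_exp_neg_mul_sq_norm_sub (d : ℕ) {b c : ℝ} (hb : 0 < b) (hc : 0 < c)
    (x : EuclideanSpace ℝ (Fin d)) :
    ∫⁻ y : EuclideanSpace ℝ (Fin d),
        ENNReal.ofReal (Real.exp (-b * ‖y‖ ^ 2)) *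
          ENNReal.ofReal (Real.exp (-c * ‖x - y‖ ^ 2)) =
      ENNReal.ofReal (Real.exp (-(b * c / (b + c)) * ‖x‖ ^ 2)) *
        ENNReal.ofReal ((Real.pi / (b + c)) ^ ((d : ℝ) / 2)) := by
  have h (y : EuclideanSpace ℝ (Fin d)) :
      ENNReal.ofReal (Real.exp (-b * ‖y‖ ^ 2)) * ENNReal.ofReal (Real.exp (-c * ‖x - y‖ ^ 2)) =
        ENNReal.ofReal (Real.exp (-(b * c / (b + c)) * ‖x‖ ^ 2)) *
          ENNReal.ofReal (Real.exp (-(b + c) * ‖y - (c / (b + c)) • x‖ ^ 2)) := by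
    rw [← ENNReal.ofReal_mul (Real.exp_pos _).le, ← ENNReal.ofReal_mul (Real.exp_pos _).le,
      ← Real.exp_add, ← Real.exp_add, norm_sub_sq_real, norm_sub_sq_real, norm_smul, mul_pow,
      real_inner_smul_right, Real.norm_eq_abs, sq_abs, real_inner_comm x y]
    congr 2
    field_simp
    ring
  simp_rw [h]
  rw [lintegral_const_mul _ (by fun_prop),
    lintegral_sub_right_eq_self (fun y : EuclideanSpace ℝ (Fin d) =>
      ENNReal.ofReal (Real.exp (-(b + c) * ‖y‖ ^ 2))),
    lintegral_exp_neg_mul_sq_norm d (by positivity)]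

/-- The Laplace transform of the squared distance of two independent `N(0, σ² I_d)` vectors. -/
lemma lintegral_exp_neg_mul_sq_dist_gaussMeasure (d : ℕ) {σ2 β : ℝ} (hσ : 0 < σ2) (hβ : 0 < β) :
    ∫⁻ x, ∫⁻ y, ENNReal.ofReal (Real.exp (-β * ‖x - y‖ ^ 2))
        ∂gaussMeasure d σ2 ∂gaussMeasure d σ2 =
      ENNReal.ofReal ((4 * σ2 * β + 1) ^ (-(d : ℝ) / 2)) := by
  obtain ⟨C, hC⟩ : ∃ C : ℝ, C = (2 * Real.pi * σ2) ^ (-(d : ℝ) / 2) := ⟨_, rfl⟩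
  have hC0 : 0 ≤ C := hC ▸ by positivity
  obtain ⟨b, hb⟩ : ∃ b : ℝ, b = 1 / (2 * σ2) := ⟨_, rfl⟩
  have hb0 : 0 < b := hb ▸ by positivity
  have h (x : EuclideanSpace ℝ (Fin d)) : ENNReal.ofReal (gaussPdf d σ2 x) =
      ENNReal.ofReal C * ENNReal.ofReal (Real.exp (-b * ‖x‖ ^ 2)) := by
    rw [← ENNReal.ofReal_mul hC0, gaussPdf, hb, hC]
    ring_nf
  have hinner (x : EuclideanSpace ℝ (Fin d)) :
      ∫⁻ y, ENNReal.ofReal (Real.exp (-β * ‖x - y‖ ^ 2)) ∂gaussMeasure d σ2 =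
        ENNReal.ofReal C * (ENNReal.ofReal (Real.exp (-(b * β / (b + β)) * ‖x‖ ^ 2)) *
          ENNReal.ofReal ((Real.pi / (b + β)) ^ ((d : ℝ) / 2))) := by
    rw [lintegral_gaussMeasure d σ2 (by fun_prop), ← lintegral_exp_neg_mul_sq_norm_sub d hb0 hβ,
      ← lintegral_const_mul _ (by fun_prop)]
    simp_rw [h, mul_assoc]
  simp_rw [hinner]
  rw [lintegral_gaussMeasure d σ2 (by fun_prop)]
  have houter (x : EuclideanSpace ℝ (Fin d)) :
      ENNReal.ofReal (gaussPdf d σ2 x) *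
        (ENNReal.ofReal C * (ENNReal.ofReal (Real.exp (-(b * β / (b + β)) * ‖x‖ ^ 2)) *
          ENNReal.ofReal ((Real.pi / (b + β)) ^ ((d : ℝ) / 2)))) =
      ENNReal.ofReal (C * C * (Real.pi / (b + β)) ^ ((d : ℝ) / 2)) *
        ENNReal.ofReal (Real.exp (-(b + b * β / (b + β)) * ‖x‖ ^ 2)) := by
    rw [h, ← ENNReal.ofReal_mul, ← ENNReal.ofReal_mul, ← ENNReal.ofReal_mul,
      ← ENNReal.ofReal_mul, ← ENNReal.ofReal_mul, neg_add, add_mul, Real.exp_add]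
    · ring_nf
    all_goals positivity
  simp_rw [houter]
  rw [lintegral_const_mul _ (by fun_prop), lintegral_exp_neg_mul_sq_norm d (by positivity),
    ← ENNReal.ofReal_mul (by positivity)]
  congr 1
  rw [mul_assoc, ← Real.mul_rpow (by positivity) (by positivity), hC,
    ← Real.mul_rpow (by positivity) (by positivity), neg_div,
    Real.rpow_neg (by positivity), Real.rpow_neg (by positivity),
    ← Real.inv_rpow (by positivity), ← Real.inv_rpow (by positivity),
    ← Real.mul_rpow (by positivity) (by positivity)]
  congr 1
  rw [hb]
  field_simp
  ring

lemma withDensity_prod_gaussPdf (d N : ℕ) {σ2 : ℝ} (hσ : 0 < σ2) :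
    (volume.withDensity fun z : Fin N → EuclideanSpace ℝ (Fin d) =>
      ENNReal.ofReal (∏ i, gaussPdf d σ2 (z i))) = Measure.pi fun _ => gaussMeasure d σ2 := by
  have := isProbabilityMeasure_gaussMeasure d hσ
  refine (Measure.pi_eq fun s hs => ?_).symm
  have hms := MeasurableSet.univ_pi hs
  have hint (i : Fin N) : Integrable ((s i).indicator (gaussPdf d σ2)) :=
    (integrable_gaussPdf d hσ).indicator (hs i)
  have hnn (i : Fin N) : 0 ≤ (s i).indicator (gaussPdf d σ2) :=
    Set.indicator_nonneg fun x _ => gaussPdf_nonneg hσ x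
  have hone (i : Fin N) :
      gaussMeasure d σ2 (s i) = ENNReal.ofReal (∫ x, (s i).indicator (gaussPdf d σ2) x) := by
    rw [gaussMeasure, withDensity_apply _ (hs i), integral_indicator (hs i),
      ofReal_integral_eq_lintegral_ofReal (integrable_gaussPdf d hσ).integrableOn
        (ae_of_all _ (gaussPdf_nonneg hσ))]
  simp_rw [hone]
  rw [← ENNReal.ofReal_prod_of_nonneg fun i _ => integral_nonneg (hnn i),
    ← integral_fintype_prod_volume_eq_prod, volume_pi,
    ofReal_integral_eq_lintegral_ofReal (Integrable.fintype_prod hint)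
      (ae_of_all _ fun z => Finset.prod_nonneg fun i _ => hnn i (z i)),
    ← volume_pi, withDensity_apply _ hms, ← lintegral_indicator hms]
  refine lintegral_congr fun z => ?_
  by_cases hz : z ∈ Set.univ.pi s
  · rw [Set.indicator_of_mem hz]
    congr 1
    exact Finset.prod_congr rfl fun i _ => (Set.indicator_of_mem (hz i trivial) _).symm
  · rw [Set.indicator_of_notMem hz]
    obtain ⟨i, hi⟩ : ∃ i, z i ∉ s i := by simpa [Set.mem_pi] using hz
    rw [Finset.prod_eq_zero (Finset.mem_univ i) (Set.indicator_of_notMem hi _),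
      ENNReal.ofReal_zero]

lemma lintegral_pi_pair {ι E : Type*} [Fintype ι] [MeasurableSpace E] (μ : Measure E)
    [IsProbabilityMeasure μ] {i j : ι} (hij : i ≠ j) {f : E × E → ℝ≥0∞} (hf : Measurable f) :
    ∫⁻ z, f (z i, z j) ∂Measure.pi (fun _ : ι => μ) = ∫⁻ x, ∫⁻ y, f (x, y) ∂μ ∂μ := by
  have hind : IndepFun (fun z : ι → E => z i) (fun z => z j) (Measure.pi fun _ : ι => μ) :=
    (iIndepFun_pi (μ := fun _ : ι => μ) (X := fun _ x => x) fun _ => aemeasurable_id).indepFun hij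
  have hmap := (indepFun_iff_map_prod_eq_prod_map_map (measurable_pi_apply i).aemeasurable
    (measurable_pi_apply j).aemeasurable).1 hind
  have heval (k : ι) : (Measure.pi fun _ : ι => μ).map (fun z => z k) = μ :=
    (measurePreserving_eval (fun _ : ι => μ) k).map_eq
  rw [heval, heval] at hmap
  rw [← lintegral_prod _ hf.aemeasurable, ← hmap, lintegral_map hf (by fun_prop)]

lemma lintegral_natCast_poissonMeasure (r : ℝ≥0) :
    ∫⁻ n, (n : ℝ≥0∞) ∂poissonMeasure r = r := by
  rw [lintegral_countable']
  simp_rw [poissonMeasure_singleton]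
  rw [tsum_eq_zero_add' ENNReal.summable]
  have h (n : ℕ) : ((n + 1 : ℕ) : ℝ≥0∞) *
      ENNReal.ofReal (Real.exp (-r) * r ^ (n + 1) / (n + 1).factorial) =
        r * poissonMeasure r {n} := by
    rw [poissonMeasure_singleton, ← ENNReal.ofReal_natCast, ← ENNReal.ofReal_coe_nnreal,
      ← ENNReal.ofReal_mul (by positivity), ← ENNReal.ofReal_mul (by positivity),
      Nat.factorial_succ]
    congr 1
    push_cast
    field_simp
    ring
  simp_rw [h]
  have htot : ∑' n, poissonMeasure r {n} = 1 := by
    simpa using (lintegral_countable' (μ := poissonMeasure r) fun _ => 1).symm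
  rw [ENNReal.tsum_mul_left, htot]
  simp

lemma measurable_map_pi_poissonMeasure {ι E : Type*} [Fintype ι] [MeasurableSpace E]
    {r : E → ι → ℝ≥0} (hr : ∀ i, Measurable fun z => r z i) :
    Measurable fun z => (Measure.pi fun i => poissonMeasure (r z i)).map fun y => (z, y) := by
  refine Measure.measurable_of_measurable_coe _ fun s hs => ?_
  have h (z : E) : (Measure.pi fun i => poissonMeasure (r z i)).map (fun y => (z, y)) s =
      ∑' y : ι → ℕ, s.indicator 1 (z, y) *
        ∏ i, ENNReal.ofReal (Real.exp (-r z i) * r z i ^ y i / (y i).factorial) := by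
    rw [← lintegral_indicator_one hs, lintegral_map (measurable_one.indicator hs) (by fun_prop),
      lintegral_countable']
    simp_rw [Measure.pi_singleton, poissonMeasure_singleton]
  simp_rw [h]
  refine Measurable.tsum fun y => ?_
  refine ((measurable_one.indicator hs).comp measurable_prodMk_right).mul ?_
  fun_prop

lemma lintegral_edge_jointLaw (d N : ℕ) {β σ2 a : ℝ} (hβ : 0 < β) (hσ : 0 < σ2)
    {α : Fin N → ℝ} (hα : ∀ i j, α i + α j = a) (p : Pairs N) :
    ∫⁻ zy, (zy.2 p : ℝ≥0∞) ∂jointLaw d N β α σ2 =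
      ENNReal.ofReal (Real.exp a * (4 * σ2 * β + 1) ^ (-(d : ℝ) / 2)) := by
  have := isProbabilityMeasure_gaussMeasure d hσ
  have hmeas : Measurable fun zy : (Fin N → EuclideanSpace ℝ (Fin d)) × (Pairs N → ℕ) =>
      (zy.2 p : ℝ≥0∞) := by fun_prop
  have hinner (z : Fin N → EuclideanSpace ℝ (Fin d)) :
      ∫⁻ zy, (zy.2 p : ℝ≥0∞) ∂(Measure.pi fun p : Pairs N => poissonMeasure
        (Real.exp (α p.1.1 + α p.1.2 - β * ‖z p.1.1 - z p.1.2‖ ^ 2)).toNNReal).map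
          (fun y => (z, y)) =
      ENNReal.ofReal (Real.exp a) *
        ENNReal.ofReal (Real.exp (-β * ‖z p.1.1 - z p.1.2‖ ^ 2)) := by
    rw [lintegral_map hmeas (by fun_prop)]
    refine ((measurePreserving_eval (fun p : Pairs N => poissonMeasure
      (Real.exp (α p.1.1 + α p.1.2 - β * ‖z p.1.1 - z p.1.2‖ ^ 2)).toNNReal) p).lintegral_comp
        (f := fun n : ℕ => (n : ℝ≥0∞)) (by fun_prop)).trans ?_
    rw [lintegral_natCast_poissonMeasure, hα, ← ENNReal.ofReal_mul (Real.exp_pos _).le,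
      ← Real.exp_add, sub_eq_add_neg, neg_mul]
    rfl
  rw [jointLaw, withDensity_prod_gaussPdf d N hσ, Measure.lintegral_bind
    (measurable_map_pi_poissonMeasure fun i => by fun_prop).aemeasurable hmeas.aemeasurable]
  simp_rw [hinner]
  rw [lintegral_const_mul _ (by fun_prop), lintegral_pi_pair (gaussMeasure d σ2) p.2.ne
    (f := fun xy => ENNReal.ofReal (Real.exp (-β * ‖xy.1 - xy.2‖ ^ 2))) (by fun_prop),
    lintegral_exp_neg_mul_sq_dist_gaussMeasure d hσ hβ, ENNReal.ofReal_mul (Real.exp_pos _).le]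

section MSLS

variable {Ω : Type} [MeasurableSpace Ω] (M : MSLS Ω)

lemma MSLS.measurable_strength (i : Fin M.N) (t : ℕ) : Measurable (M.strength i t) := by
  have := M.Y_meas
  unfold MSLS.strength
  fun_prop

/-- The expected nodal strength under any measure for which the latent positions and the edges
follow the Poisson latent space law of state `k`. -/
lemma MSLS.lintegral_strength {a : ℝ} (hα : ∀ i j, M.α i + M.α j = a) (i : Fin M.N) (t : ℕ)
    (k : Fin M.K) {μ : Measure Ω}
    (hμ : μ.map (fun ω => ((fun i => M.Z i k ω), fun p : Pairs M.N => M.Y p.1.1 p.1.2 t ω)) =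
      jointLaw M.d M.N M.β M.α (M.σ2 k)) :
    ∫⁻ ω, (M.strength i t ω : ℝ≥0∞) ∂μ =
      ENNReal.ofReal (((M.N : ℝ) - 1) * Real.exp a *
        (4 * M.σ2 k * M.β + 1) ^ (-(M.d : ℝ) / 2)) := by
  have hY := M.Y_meas
  have hZ := M.Z_meas
  have hσ := M.σ2_pos k
  have hβ := M.β_pos
  have hpair (p : Pairs M.N) : ∫⁻ ω, (M.Y p.1.1 p.1.2 t ω : ℝ≥0∞) ∂μ =
      ENNReal.ofReal (Real.exp a * (4 * M.σ2 k * M.β + 1) ^ (-(M.d : ℝ) / 2)) := by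
    rw [← lintegral_edge_jointLaw M.d M.N hβ hσ hα p, ← hμ,
      lintegral_map (by fun_prop) (by fun_prop)]
  have hedge (j : Fin M.N) (hj : j ∈ Finset.univ.erase i) :
      ∫⁻ ω, (M.Y i j t ω : ℝ≥0∞) ∂μ =
        ENNReal.ofReal (Real.exp a * (4 * M.σ2 k * M.β + 1) ^ (-(M.d : ℝ) / 2)) := by
    rcases lt_or_gt_of_ne (Finset.ne_of_mem_erase hj) with h | h
    · simp_rw [M.Y_symm i j]
      exact hpair ⟨(j, i), h⟩
    · exact hpair ⟨(i, j), h⟩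
  simp_rw [MSLS.strength, Nat.cast_sum]
  rw [lintegral_finsetSum _ fun j _ => by fun_prop, Finset.sum_congr rfl hedge,
    Finset.sum_const, Finset.card_erase_of_mem (Finset.mem_univ i), Finset.card_univ,
    Fintype.card_fin, nsmul_eq_mul, ← ENNReal.ofReal_natCast,
    ← ENNReal.ofReal_mul (Nat.cast_nonneg _), Nat.cast_pred (Fin.pos i),
    ← mul_assoc]

lemma MSLS.integral_strength_eq_toReal (i : Fin M.N) (t : ℕ) (μ : Measure Ω) :
    ∫ ω, (M.strength i t ω : ℝ) ∂μ = (∫⁻ ω, (M.strength i t ω : ℝ≥0∞) ∂μ).toReal := by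
  have := M.measurable_strength i t
  rw [integral_eq_lintegral_of_nonneg_ae (ae_of_all _ fun ω => Nat.cast_nonneg _)
    (by fun_prop)]
  simp_rw [ENNReal.ofReal_natCast]

lemma MSLS.expected_strength_nonneg (a : ℝ) (i : Fin M.N) (k : Fin M.K) :
    0 ≤ ((M.N : ℝ) - 1) * Real.exp a * (4 * M.σ2 k * M.β + 1) ^ (-(M.d : ℝ) / 2) := by
  have hσ := M.σ2_pos k
  have hβ := M.β_pos
  have hN : (1 : ℝ) ≤ M.N := by exact_mod_cast Fin.pos i
  have := sub_nonneg.2 hN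
  positivity

/-- Law of total expectation with respect to the current state. -/
lemma MSLS.lintegral_cond_prev (t : ℕ) (l : Fin M.K) (f : Ω → ℝ≥0∞) :
    ∫⁻ ω, f ω ∂(M.P[|{ω | M.s t ω = l}]) =
      ∑ k, ENNReal.ofReal (M.q l k) *
        ∫⁻ ω, f ω ∂(M.P[|{ω | M.s t ω = l} ∩ {ω | M.s (t + 1) ω = k}]) := by
  have hms (t : ℕ) (k : Fin M.K) : MeasurableSet {ω | M.s t ω = k} :=
    M.s_meas t (measurableSet_singleton k)
  have := cond_isProbabilityMeasure (M.state_pos t l)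
  have hsum := sum_meas_smul_cond_fiber (M.s_meas (t + 1)) (M.P[|{ω | M.s t ω = l}])
  conv_lhs => rw [← hsum]
  rw [lintegral_finsetSum_measure]
  refine Finset.sum_congr rfl fun k _ => ?_
  rw [lintegral_smul_measure, smul_eq_mul, ← M.trans_prob t l k,
    ENNReal.ofReal_toReal (measure_ne_top _ _),
    ← cond_cond_eq_cond_inter (hms t l) (hms (t + 1) k)]
  rfl

end MSLS

/-- Under the MS-LS model with `α_i + α_j = α` for all pairs, the expected
nodal strength given the previous state `l` is the `q_{lk}`-mixture of the within-state
expected nodal strengths, and equals `(N-1) e^α Σ_k q_{lk} (4σ_k²β + 1)^{-d/2}`. -/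
theorem statement1 {Ω : Type} [MeasurableSpace Ω] (M : MSLS Ω) (a : ℝ)
    (hα : ∀ i j, M.α i + M.α j = a) (i : Fin M.N) (t : ℕ) (l : Fin M.K) :
    (∫ ω, (M.strength i (t + 1) ω : ℝ) ∂(M.P[|{ω | M.s t ω = l}]) =
      ∑ k, M.q l k *
        ∫ ω, (M.strength i (t + 1) ω : ℝ) ∂(M.P[|{ω | M.s (t + 1) ω = k}])) ∧
    (∫ ω, (M.strength i (t + 1) ω : ℝ) ∂(M.P[|{ω | M.s t ω = l}]) =
      ((M.N : ℝ) - 1) * Real.exp a *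
        ∑ k, M.q l k * (4 * M.σ2 k * M.β + 1) ^ (-(M.d : ℝ) / 2)) := by
  have hval (k : Fin M.K) := M.expected_strength_nonneg a i k
  have hprev : ∫⁻ ω, (M.strength i (t + 1) ω : ℝ≥0∞) ∂(M.P[|{ω | M.s t ω = l}]) =
      ENNReal.ofReal (∑ k, M.q l k * (((M.N : ℝ) - 1) * Real.exp a *
        (4 * M.σ2 k * M.β + 1) ^ (-(M.d : ℝ) / 2))) := by
    rw [M.lintegral_cond_prev,
      ENNReal.ofReal_sum_of_nonneg fun k _ => mul_nonneg (M.q_nonneg l k) (hval k)]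
    refine Finset.sum_congr rfl fun k _ => ?_
    rw [ENNReal.ofReal_mul (M.q_nonneg l k)]
    by_cases hq : M.q l k = 0
    · simp [hq]
    · rw [M.lintegral_strength hα i (t + 1) k (M.cond_law_pair t l k hq)]
  have hcur (k : Fin M.K) :
      ∫ ω, (M.strength i (t + 1) ω : ℝ) ∂(M.P[|{ω | M.s (t + 1) ω = k}]) =
        ((M.N : ℝ) - 1) * Real.exp a * (4 * M.σ2 k * M.β + 1) ^ (-(M.d : ℝ) / 2) := by
    rw [M.integral_strength_eq_toReal,
      M.lintegral_strength hα i (t + 1) k (M.cond_law_state (t + 1) k),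
      ENNReal.toReal_ofReal (hval k)]
  rw [M.integral_strength_eq_toReal, hprev, ENNReal.toReal_ofReal
    (Finset.sum_nonneg fun k _ => mul_nonneg (M.q_nonneg l k) (hval k))]
  simp_rw [hcur]
  refine ⟨trivial, ?_⟩
  rw [Finset.mul_sum]
  exact Finset.sum_congr rfl fun k _ => by ring
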